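/- arXiv:2206.12811 — 2 statements merged into one kernel-verified Lean document; each statement's English description precedes it below -/
import Mathlib

section
/- If an encoder f is perfectly aligned and perfectly uniform, then its BPR loss equals the constant −1 + ∫_{S^{d-1}} ∫_{S^{d-1}} log(e + e^{⟨x,y⟩}) dσ_{d-1}(x) dσ_{d-1}(y), a constant independent of f. -/
open MeasureTheory
open scoped RealInnerProductSpace

/-- The logistic sigmoid function `sigmoid(t) = 1 / (1 + e^{-t})`. -/
noncomputable def sigmoid (t : ℝ) : ℝ := 1 / (1 + Real.exp (-t))

/-- `ℓ²`-normalization onto the unit sphere: `f̃(x) = f(x) / ‖f(x)‖`. -/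
noncomputable def normed {E : Type*} [NormedAddCommGroup E] [NormedSpace ℝ E]
    (x : E) : E := ‖x‖⁻¹ • x

/-- The uniform probability measure `σ_{d-1}` on the unit sphere
`S^{d-1} ⊆ ℝ^d`, viewed as a measure on the ambient space `ℝ^d`:
the normalization of the spherical measure `volume.toSphere`. -/
noncomputable def uniformSphere (d : ℕ) : Measure (EuclideanSpace ℝ (Fin d)) :=
  Measure.map Subtype.val
    (((volume : Measure (EuclideanSpace ℝ (Fin d))).toSphere Set.univ)⁻¹ •
      (volume : Measure (EuclideanSpace ℝ (Fin d))).toSphere)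

/-- The BPR loss of the encoder `(fU, fI)`:
`L_BPR = E_{(u,i) ∼ p_pos, i⁻ ∼ p_item} [-log sigmoid(⟪f̃(u), f̃(i)⟫ - ⟪f̃(u), f̃(i⁻)⟫)]`,
where `p_item` is the second marginal of `p_pos` and the negative item `i⁻` is
sampled independently of `(u, i)`. -/
noncomputable def bprLoss {U I : Type*} [MeasurableSpace U] [MeasurableSpace I]
    {d : ℕ} (p_pos : Measure (U × I)) (fU : U → EuclideanSpace ℝ (Fin d))
    (fI : I → EuclideanSpace ℝ (Fin d)) : ℝ :=
  ∫ p, (∫ j, -Real.log (sigmoid (⟪normed (fU p.1), normed (fI p.2)⟫ -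
      ⟪normed (fU p.1), normed (fI j)⟫)) ∂(p_pos.map Prod.snd)) ∂p_pos

/-- An encoder `(fU, fI)` is perfectly aligned if `f̃(u) = f̃(i)` almost surely
over `(u, i) ∼ p_pos`. -/
def PerfectlyAligned {U I : Type*} [MeasurableSpace U] [MeasurableSpace I]
    {d : ℕ} (p_pos : Measure (U × I)) (fU : U → EuclideanSpace ℝ (Fin d))
    (fI : I → EuclideanSpace ℝ (Fin d)) : Prop :=
  ∀ᵐ p ∂p_pos, normed (fU p.1) = normed (fI p.2)

/-- An encoder `(fU, fI)` is perfectly uniform if the pushforward of the user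
marginal `p_user` under `f̃` and the pushforward of the item marginal `p_item`
under `f̃` both equal the uniform measure `σ_{d-1}` on the sphere. -/
def PerfectlyUniform {U I : Type*} [MeasurableSpace U] [MeasurableSpace I]
    {d : ℕ} (p_pos : Measure (U × I)) (fU : U → EuclideanSpace ℝ (Fin d))
    (fI : I → EuclideanSpace ℝ (Fin d)) : Prop :=
  Measure.map (fun u => normed (fU u)) (p_pos.map Prod.fst) = uniformSphere d ∧
  Measure.map (fun i => normed (fI i)) (p_pos.map Prod.snd) = uniformSphere d

/-- If an encoder `(fU, fI)` (measurable, with representations on the unit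
sphere) is perfectly aligned and perfectly uniform, then its BPR loss equals
the constant `-1 + ∫∫ log(e + e^{⟪x,y⟫}) dσ_{d-1}(x) dσ_{d-1}(y)`, which is
independent of the encoder. -/
theorem bprLoss_of_perfectlyAligned_of_perfectlyUniform {d : ℕ} (hd : 2 ≤ d)
    {U I : Type*} [MeasurableSpace U] [MeasurableSpace I]
    (p_pos : Measure (U × I)) [IsProbabilityMeasure p_pos]
    (fU : U → EuclideanSpace ℝ (Fin d)) (fI : I → EuclideanSpace ℝ (Fin d))
    (hfU : Measurable fU) (hfI : Measurable fI)
    (hU0 : ∀ u, fU u ≠ 0) (hI0 : ∀ i, fI i ≠ 0)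
    (halign : PerfectlyAligned p_pos fU fI)
    (huniform : PerfectlyUniform p_pos fU fI) :
    bprLoss p_pos fU fI =
      -1 + ∫ x, (∫ y, Real.log (Real.exp 1 + Real.exp ⟪x, y⟫)
        ∂(uniformSphere d)) ∂(uniformSphere d) := by
  obtain ⟨hU, hI⟩ := huniform
  have hmU : Measurable (fun u => normed (fU u)) := by unfold normed; fun_prop
  have hmI : Measurable (fun i => normed (fI i)) := by unfold normed; fun_prop
  have hnU : ∀ u, ‖normed (fU u)‖ = 1 := fun u => by
    simp [normed, norm_smul, hU0 u]
  have hnI : ∀ u, ‖normed (fI u)‖ = 1 := fun u => by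
    simp [normed, norm_smul, hI0 u]
  have hpU : IsProbabilityMeasure (p_pos.map Prod.fst) :=
    Measure.isProbabilityMeasure_map measurable_fst.aemeasurable
  have hpI : IsProbabilityMeasure (p_pos.map Prod.snd) :=
    Measure.isProbabilityMeasure_map measurable_snd.aemeasurable
  have hps : IsProbabilityMeasure (uniformSphere d) := by
    rw [← hU]; exact Measure.isProbabilityMeasure_map hmU.aemeasurable
  have hbd : ∀ u i, ‖Real.log (Real.exp 1 + Real.exp ⟪normed (fU u), normed (fI i)⟫)‖ ≤ 2 := by
    intro u i
    have h1 : ⟪normed (fU u), normed (fI i)⟫ ≤ 1 := by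
      have := real_inner_le_norm (normed (fU u)) (normed (fI i))
      rwa [hnU, hnI, one_mul] at this
    have h2 := Real.exp_le_exp.2 h1
    have h3 := Real.exp_pos ⟪normed (fU u), normed (fI i)⟫
    have h4 := Real.add_one_le_exp (1 : ℝ)
    rw [Real.norm_eq_abs, abs_of_nonneg (Real.log_nonneg (by linarith))]
    rw [Real.log_le_iff_le_exp (by linarith)]
    have h5 : Real.exp 2 = Real.exp 1 * Real.exp 1 := by rw [← Real.exp_add]; norm_num
    rw [h5]; nlinarith
  have hint : Integrable (fun q : U × I =>
      Real.log (Real.exp 1 + Real.exp ⟪normed (fU q.1), normed (fI q.2)⟫))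
      ((p_pos.map Prod.fst).prod (p_pos.map Prod.snd)) := by
    refine Integrable.of_bound (C := 2) ?_ (Filter.Eventually.of_forall fun q => hbd q.1 q.2)
    refine Measurable.aestronglyMeasurable ?_
    refine Real.measurable_log.comp (measurable_const.add (Real.measurable_exp.comp ?_))
    exact Measurable.inner (hmU.comp measurable_fst) (hmI.comp measurable_snd)
  have hinner : ∀ x, ∫ y, Real.log (Real.exp 1 + Real.exp ⟪x, y⟫) ∂(uniformSphere d)
      = ∫ j, Real.log (Real.exp 1 + Real.exp ⟪x, normed (fI j)⟫) ∂(p_pos.map Prod.snd) := by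
    intro x
    rw [← hI, integral_map hmI.aemeasurable]
    exact Measurable.aestronglyMeasurable (by fun_prop)
  have hG : StronglyMeasurable (fun x : EuclideanSpace ℝ (Fin d) =>
      ∫ y, Real.log (Real.exp 1 + Real.exp ⟪x, y⟫) ∂(uniformSphere d)) := by
    refine StronglyMeasurable.integral_prod_right
      (f := fun x y : EuclideanSpace ℝ (Fin d) => Real.log (Real.exp 1 + Real.exp ⟪x, y⟫)) ?_
    refine Measurable.stronglyMeasurable ?_
    simp only [Function.uncurry_def]
    fun_prop
  have houter : ∫ x, (∫ y, Real.log (Real.exp 1 + Real.exp ⟪x, y⟫)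
        ∂(uniformSphere d)) ∂(uniformSphere d) =
      ∫ u, (∫ j, Real.log (Real.exp 1 + Real.exp ⟪normed (fU u), normed (fI j)⟫)
        ∂(p_pos.map Prod.snd)) ∂(p_pos.map Prod.fst) := by
    conv_lhs => rw [← hU]
    rw [integral_map hmU.aemeasurable (by rw [hU]; exact hG.aestronglyMeasurable)]
    rw [hU]
    simp only [hinner]
  have hGi := hint.integral_prod_left
  have hsig : ∀ t : ℝ, -Real.log (sigmoid (1 - t)) =
      Real.log (Real.exp 1 + Real.exp t) - 1 := by
    intro t
    have h3 := Real.exp_pos t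
    have h4 := Real.exp_pos 1
    have h : Real.exp 1 + Real.exp t = Real.exp 1 * (1 + Real.exp (-(1 - t))) := by
      rw [mul_add, ← Real.exp_add]; ring_nf
    have h5 := Real.exp_pos (-(1 - t))
    rw [h, Real.log_mul h4.ne' (by positivity), Real.log_exp, sigmoid, one_div, Real.log_inv]
    ring
  rw [houter, bprLoss]
  have key : ∀ᵐ p ∂p_pos, (∫ j, -Real.log (sigmoid (⟪normed (fU p.1), normed (fI p.2)⟫ -
      ⟪normed (fU p.1), normed (fI j)⟫)) ∂(p_pos.map Prod.snd)) =
      (∫ j, Real.log (Real.exp 1 + Real.exp ⟪normed (fU p.1), normed (fI j)⟫)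
        ∂(p_pos.map Prod.snd)) - 1 := by
    filter_upwards [halign] with p hp
    rw [← hp, real_inner_self_eq_norm_sq, hnU, one_pow]
    simp only [hsig]
    rw [integral_sub _ (integrable_const _)]
    · simp
    · refine Integrable.of_bound (C := 2) ?_ (Filter.Eventually.of_forall fun q => hbd p.1 q)
      exact Measurable.aestronglyMeasurable (by fun_prop)
  rw [integral_congr_ae key]
  rw [← integral_map (φ := Prod.fst) (f := fun u => (∫ j, Real.log (Real.exp 1 +
    Real.exp ⟪normed (fU u), normed (fI j)⟫) ∂(p_pos.map Prod.snd)) - 1)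
    measurable_fst.aemeasurable (hGi.sub (integrable_const 1)).aestronglyMeasurable]
  rw [integral_sub hGi (integrable_const _)]
  simp
  ring
end

section
/- For any encoder f, the BPR loss satisfies L_BPR(f) ≥ E_{(u,i)∼p_pos, i⁻∼p_item}[−1 + log(e + e^{⟨f̃(u), f̃(i⁻)⟩})], and equality holds if and only if f is perfectly aligned, i.e., f̃(u) = f̃(i) almost surely over (u,i) ∼ p_pos. -/
open MeasureTheory
open scoped RealInnerProductSpace

lemma aux_sig (a b : ℝ) : -Real.log (sigmoid (a - b)) = Real.log (1 + Real.exp (b - a)) := by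
  unfold sigmoid
  rw [one_div, Real.log_inv, neg_neg, neg_sub]

lemma aux_rhs (b : ℝ) : -1 + Real.log (Real.exp 1 + Real.exp b)
    = Real.log (1 + Real.exp (b - 1)) := by
  have h : Real.exp 1 + Real.exp b = Real.exp 1 * (1 + Real.exp (b - 1)) := by
    rw [mul_add, mul_one, ← Real.exp_add]
    congr 2
    ring
  rw [h, Real.log_mul (by positivity) (by positivity), Real.log_exp]
  ring

lemma aux_mono {s t : ℝ} (h : s ≤ t) :
    Real.log (1 + Real.exp s) ≤ Real.log (1 + Real.exp t) := by
  gcongr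

lemma aux_inj {s t : ℝ} (h : Real.log (1 + Real.exp s) = Real.log (1 + Real.exp t)) :
    s = t := by
  have := Real.log_injOn_pos (Set.mem_Ioi.2 (by positivity)) (Set.mem_Ioi.2 (by positivity)) h
  exact Real.exp_injective (by linarith)

lemma aux_norm {E : Type*} [NormedAddCommGroup E] [NormedSpace ℝ E] {x : E} (h : x ≠ 0) :
    ‖normed x‖ = 1 := by
  unfold normed
  rw [norm_smul, norm_inv, norm_norm, inv_mul_cancel₀ (norm_ne_zero_iff.2 h)]

lemma aux_int {X : Type*} [MeasurableSpace X] (μ : Measure X) [IsFiniteMeasure μ]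
    (g : X → ℝ) (hg : Measurable g) (hb : ∀ x, g x ≤ 2) :
    Integrable (fun x => Real.log (1 + Real.exp (g x))) μ := by
  refine Integrable.of_bound (C := Real.log (1 + Real.exp 2)) ?_ ?_
  · exact (Real.measurable_log.comp
      (measurable_const.add (Real.measurable_exp.comp hg))).aestronglyMeasurable
  · refine Filter.Eventually.of_forall fun x => ?_
    rw [Real.norm_eq_abs, abs_of_nonneg]
    · exact aux_mono (hb x)
    · exact Real.log_nonneg (by linarith [Real.exp_pos (g x)])

/-- For any encoder `(fU, fI)` whose representations lie on the unit sphere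
(`fU u ≠ 0`, `fI i ≠ 0`), the BPR loss satisfies
`L_BPR(f) ≥ E_{(u,i) ∼ p_pos, i⁻ ∼ p_item}[-1 + log(e + e^{⟪f̃(u), f̃(i⁻)⟫})]`,
with equality if and only if the encoder is perfectly aligned. -/
theorem bprLoss_ge_and_eq_iff_perfectlyAligned {d : ℕ} (hd : 2 ≤ d)
    {U I : Type*} [MeasurableSpace U] [MeasurableSpace I]
    (p_pos : Measure (U × I)) [IsProbabilityMeasure p_pos]
    (fU : U → EuclideanSpace ℝ (Fin d)) (fI : I → EuclideanSpace ℝ (Fin d))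
    (hfU : Measurable fU) (hfI : Measurable fI)
    (hU0 : ∀ u, fU u ≠ 0) (hI0 : ∀ i, fI i ≠ 0) :
    bprLoss p_pos fU fI ≥
      (∫ p, (∫ j, (-1 + Real.log (Real.exp 1 +
          Real.exp ⟪normed (fU p.1), normed (fI j)⟫)) ∂(p_pos.map Prod.snd))
        ∂p_pos) ∧
    (bprLoss p_pos fU fI =
        (∫ p, (∫ j, (-1 + Real.log (Real.exp 1 +
            Real.exp ⟪normed (fU p.1), normed (fI j)⟫)) ∂(p_pos.map Prod.snd))
          ∂p_pos) ↔
      PerfectlyAligned p_pos fU fI) := by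
  classical
  have hn : ∀ u, ‖normed (fU u)‖ = 1 := fun u => aux_norm (hU0 u)
  have hm : ∀ i, ‖normed (fI i)‖ = 1 := fun i => aux_norm (hI0 i)
  have mU : Measurable fun u => normed (fU u) := by
    unfold normed
    exact hfU.norm.inv.smul hfU
  have mI : Measurable fun i => normed (fI i) := by
    unfold normed
    exact hfI.norm.inv.smul hfI
  have hle : ∀ u i, ⟪normed (fU u), normed (fI i)⟫ ≤ 1 := fun u i => by
    have := real_inner_le_norm (normed (fU u)) (normed (fI i))
    rwa [hn, hm, one_mul] at this
  have hge : ∀ u i, -1 ≤ ⟪normed (fU u), normed (fI i)⟫ := fun u i => by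
    have := neg_le_of_abs_le (abs_real_inner_le_norm (normed (fU u)) (normed (fI i)))
    rwa [hn, hm, one_mul] at this
  have hν : IsProbabilityMeasure (p_pos.map Prod.snd) :=
    Measure.isProbabilityMeasure_map measurable_snd.aemeasurable
  have heq1 : ∀ u i, ⟪normed (fU u), normed (fI i)⟫ = 1 ↔ normed (fU u) = normed (fI i) :=
    fun u i => inner_eq_one_iff_of_norm_eq_one (hn u) (hm i)
  unfold bprLoss PerfectlyAligned
  simp only [aux_sig, aux_rhs]
  generalize p_pos.map Prod.snd = ν at hν
  have mb : Measurable fun q : (U × I) × I => ⟪normed (fU q.1.1), normed (fI q.2)⟫ :=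
    (mU.comp (measurable_fst.comp measurable_fst)).inner (mI.comp measurable_snd)
  have ma : Measurable fun q : (U × I) × I => ⟪normed (fU q.1.1), normed (fI q.1.2)⟫ :=
    (mU.comp (measurable_fst.comp measurable_fst)).inner
      (mI.comp (measurable_snd.comp measurable_fst))
  have iF := aux_int (p_pos.prod ν) _ (mb.sub ma) (fun q => by
    have h1 := hle q.1.1 q.2
    have h2 := hge q.1.1 q.1.2
    show ⟪normed (fU q.1.1), normed (fI q.2)⟫ - ⟪normed (fU q.1.1), normed (fI q.1.2)⟫ ≤ 2
    linarith)
  have iG := aux_int (p_pos.prod ν) _ (mb.sub_const 1) (fun q => by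
    have h1 := hle q.1.1 q.2
    show ⟪normed (fU q.1.1), normed (fI q.2)⟫ - 1 ≤ 2
    linarith)
  have eF := integral_prod _ iF
  have eG := integral_prod _ iG
  simp only [Pi.sub_apply] at eF eG
  rw [← eF, ← eG]
  have hFG : ∀ q : (U × I) × I,
      Real.log (1 + Real.exp (⟪normed (fU q.1.1), normed (fI q.2)⟫ - 1)) ≤
      Real.log (1 + Real.exp (⟪normed (fU q.1.1), normed (fI q.2)⟫
        - ⟪normed (fU q.1.1), normed (fI q.1.2)⟫)) := fun q =>
    aux_mono (by linarith [hle q.1.1 q.1.2])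
  refine ⟨integral_mono iG iF hFG, fun h => ?_, fun h => ?_⟩
  · have h' := (integral_eq_iff_of_ae_le iG iF (Filter.Eventually.of_forall hFG)).1 h.symm
    have h2 := Measure.ae_ae_of_ae_prod h'
    filter_upwards [h2] with p hp
    obtain ⟨j, hj⟩ := hp.exists
    have := aux_inj hj
    simp only [Pi.sub_apply] at this
    exact (heq1 _ _).1 (by linarith)
  · rw [eF, eG]
    refine integral_congr_ae ?_
    filter_upwards [h] with p hp
    rw [(heq1 _ _).2 hp]
end
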